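/- arXiv:1310.3265 — 4 statements merged into one kernel-verified Lean document; each statement's English description precedes it below -/
import Mathlib

section
/- Let q be a power of an odd prime with q ≡ 1 (mod 4), let n = q² + 1 and s = n/2. Then the q²-ary cyclotomic cosets modulo 2n satisfy: C_s = {s}, C_{3s} = {3s}, and for every integer i with 1 ≤ i ≤ s−1, the coset of s−2i is C_{s−2i} = {(s−2i) mod 2n, (s+2i) mod 2n}. -/
/-- The `q²`-ary cyclotomic coset of `x` modulo `N`, viewed as a subset of `ZMod N`:
`C_x = { x · q^(2k) mod N : k ∈ ℕ }`. -/
def cyclCoset (q N : ℕ) (x : ZMod N) : Set (ZMod N) :=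
  {y | ∃ k : ℕ, y = x * (q : ZMod N) ^ (2 * k)}

/-- If multiplication by `q²` swaps `x` and `y`, then the coset of `x` is `{x, y}`. -/
theorem cyclCoset_eq_pair {q N : ℕ} {x y : ZMod N} (hxy : x * (q : ZMod N) ^ 2 = y)
    (hyx : y * (q : ZMod N) ^ 2 = x) : cyclCoset q N x = {x, y} := by
  ext z
  simp only [cyclCoset, Set.mem_ofPred_eq, Set.mem_insert_iff, Set.mem_singleton_iff]
  constructor
  · rintro ⟨k, rfl⟩
    induction k with
    | zero => simp
    | succ k ih =>
      rw [mul_add, mul_one, pow_add, ← mul_assoc]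
      rcases ih with h | h <;> rw [h]
      · exact Or.inr hxy
      · exact Or.inl hyx
  · rintro (rfl | rfl)
    · exact ⟨0, by simp⟩
    · exact ⟨1, by simp [hxy]⟩

/-- If multiplication by `q²` fixes `x`, then the coset of `x` is `{x}`. -/
theorem cyclCoset_eq_singleton {q N : ℕ} {x : ZMod N} (hx : x * (q : ZMod N) ^ 2 = x) :
    cyclCoset q N x = {x} := by
  rw [cyclCoset_eq_pair hx hx, Set.pair_eq_singleton]

/-- Let `q ≡ 1 (mod 4)` be a power of an odd prime, `n = q² + 1`,
`s = n/2`.  Then the `q²`-ary cyclotomic cosets modulo `2n` satisfy `C_s = {s}`,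
`C_{3s} = {3s}` and `C_{s-2i} = {s-2i, s+2i}` for `1 ≤ i ≤ s-1`. -/
theorem cyclotomic_cosets_q2_plus_one (p e q n s : ℕ) (hp : p.Prime) (hpodd : Odd p)
    (he : 0 < e) (hq : q = p ^ e) (hq4 : q % 4 = 1)
    (hn : n = q ^ 2 + 1) (hs : s = n / 2) :
    cyclCoset q (2 * n) (s : ZMod (2 * n)) = {(s : ZMod (2 * n))} ∧
    cyclCoset q (2 * n) (3 * s : ZMod (2 * n)) = {(3 * s : ZMod (2 * n))} ∧
    ∀ i : ℕ, 1 ≤ i → i ≤ s - 1 →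
      cyclCoset q (2 * n) ((s : ZMod (2 * n)) - 2 * i) =
        {(s : ZMod (2 * n)) - 2 * i, (s : ZMod (2 * n)) + 2 * i} := by
  obtain ⟨t, ht, hqt⟩ : ∃ t, s = 4 * t + 1 ∧ q ^ 2 = 8 * t + 1 := by
    obtain ⟨m, rfl⟩ : ∃ m, q = 4 * m + 1 := ⟨q / 4, by omega⟩
    have hsq : (4 * m + 1) ^ 2 = 8 * (2 * m ^ 2 + m) + 1 := by ring
    exact ⟨2 * m ^ 2 + m, by omega, hsq⟩
  have hN : 4 * (s : ZMod (2 * n)) = 0 := by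
    have h : 2 * n = 4 * s := by omega
    simpa [h] using ZMod.natCast_self (2 * n)
  have hst : (s : ZMod (2 * n)) = 4 * t + 1 := by exact_mod_cast congrArg Nat.cast ht
  have hq2 : (q : ZMod (2 * n)) ^ 2 = 8 * t + 1 := by exact_mod_cast congrArg Nat.cast hqt
  have hfix : (s : ZMod (2 * n)) * (q : ZMod (2 * n)) ^ 2 = s := by
    linear_combination (s : ZMod (2 * n)) * hq2 + 2 * t * hN
  have hneg (i : ZMod (2 * n)) : 2 * i * (q : ZMod (2 * n)) ^ 2 = -(2 * i) := by
    linear_combination 2 * i * hq2 + i * hN - 4 * i * hst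
  refine ⟨cyclCoset_eq_singleton hfix, cyclCoset_eq_singleton ?_, fun i _ _ =>
    cyclCoset_eq_pair ?_ ?_⟩
  · linear_combination 3 * hfix
  · linear_combination hfix - hneg i
  · linear_combination hfix + hneg i
end

section
/- Let q be a power of an odd prime with q ≡ 1 (mod 4), let n = q² + 1, s = n/2, and let β be a primitive 2n-th root of unity in F_{q⁴}. For an integer i with 1 ≤ i ≤ s−1, let C be the negacyclic code of length n over F_{q²} generated by g(x) = M^{(s)}(x)·M^{(s+2)}(x)·⋯·M^{(s+2i)}(x), where M^{(j)}(x) is the minimal polynomial of β^j over F_{q²}. Then C is an MDS code with parameters [n, n−2i−1, 2i+2]_{q²}: its dimension over F_{q²} is n−2i−1 and its minimum Hamming distance equals 2i+2. -/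
open Polynomial

/-- The polynomial `c₀ + c₁ x + ⋯ + c_{n-1} x^{n-1}` associated to the vector `c`. -/
noncomputable def vecPoly {F : Type*} [Semiring F] {n : ℕ} (c : Fin n → F) : F[X] :=
  ∑ k : Fin n, Polynomial.C (c k) * X ^ (k : ℕ)

section VecPoly

variable {F : Type*} [Field F] {n : ℕ}

theorem vecPoly_coeff (c : Fin n → F) (k : Fin n) : (vecPoly c).coeff k = c k := by
  simp [vecPoly, finsetSum_coeff, coeff_C_mul, coeff_X_pow, Fin.val_inj]

theorem vecPoly_injective : Function.Injective (vecPoly : (Fin n → F) → F[X]) := by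
  intro a b h
  funext k
  rw [← vecPoly_coeff a, h, vecPoly_coeff]

theorem degree_vecPoly_lt (c : Fin n → F) : (vecPoly c).degree < n := by
  refine (degree_sum_le _ _).trans_lt ((Finset.sup_lt_iff (WithBot.bot_lt_coe n)).2 fun k _ => ?_)
  exact (degree_C_mul_X_pow_le _ _).trans_lt (WithBot.coe_lt_coe.2 k.2)

theorem vecPoly_coeff_eq_self {f : F[X]} (hf : f.degree < n) :
    vecPoly (fun k : Fin n => f.coeff k) = f := by
  ext k
  by_cases hk : k < n
  · exact vecPoly_coeff (fun k : Fin n => f.coeff k) ⟨k, hk⟩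
  · have hk' : (n : WithBot ℕ) ≤ k := by exact_mod_cast not_lt.1 hk
    rw [coeff_eq_zero_of_degree_lt (hf.trans_le hk'),
      coeff_eq_zero_of_degree_lt ((degree_vecPoly_lt _).trans_le hk')]

theorem aeval_vecPoly {E : Type*} [Field E] [Algebra F E] (c : Fin n → F) (x : E) :
    aeval x (vecPoly c) = ∑ k, algebraMap F E (c k) * x ^ (k : ℕ) := by
  simp [vecPoly]

/-- The code of length `d + m` generated by a monic polynomial of degree `d` has dimension `m`. -/
theorem card_dvd_vecPoly [Fintype F] {g : F[X]} (hg : g.Monic) {m : ℕ}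
    (hn : g.natDegree + m = n) :
    Nat.card {c : Fin n → F // g ∣ vecPoly c} = Fintype.card F ^ m := by
  have hdeg (f : F[X]) : (g * f).degree < n ↔ f.degree < m := by
    rcases eq_or_ne f 0 with rfl | hf
    · simp
    · rw [degree_eq_natDegree (mul_ne_zero hg.ne_zero hf), degree_eq_natDegree hf,
        hg.natDegree_mul' hf]
      norm_cast
      omega
  have hvec (a : Fin m → F) : vecPoly (fun k : Fin n => (g * vecPoly a).coeff k) = g * vecPoly a :=
    vecPoly_coeff_eq_self ((hdeg _).2 (degree_vecPoly_lt a))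
  let φ : (Fin m → F) → {c : Fin n → F // g ∣ vecPoly c} := fun a =>
    ⟨fun k => (g * vecPoly a).coeff k, (hvec a).symm ▸ dvd_mul_right g (vecPoly a)⟩
  have hφ_val (a : Fin m → F) : vecPoly (φ a).1 = g * vecPoly a := hvec a
  have hφ : Function.Bijective φ := by
    constructor
    · intro a b hab
      have h : g * vecPoly a = g * vecPoly b := by
        rw [← hφ_val a, ← hφ_val b, hab]
      exact vecPoly_injective (mul_left_cancel₀ hg.ne_zero h)
    · rintro ⟨c, f, hf⟩
      have hfm : f.degree < m := (hdeg f).1 (hf ▸ degree_vecPoly_lt c)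
      refine ⟨fun k => f.coeff k, Subtype.ext (vecPoly_injective ?_)⟩
      rw [hφ_val, vecPoly_coeff_eq_self hfm, hf]
  rw [← Nat.card_eq_of_bijective φ hφ]
  simp

/-- The BCH bound: a nonzero word vanishing at `δ` points `α, α γ, …, α γ ^ (δ - 1)`, where the
powers `1, γ, …, γ ^ (n - 1)` are distinct, has weight greater than `δ`. -/
theorem lt_hammingNorm_of_aeval_eq_zero [DecidableEq F] {E : Type*} [Field E] [Algebra F E]
    {α γ : E} (hα : α ≠ 0) (hγ : Function.Injective fun k : Fin n => γ ^ (k : ℕ)) {δ : ℕ}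
    {c : Fin n → F} (hc : c ≠ 0) (h : ∀ t < δ, aeval (α * γ ^ t) (vecPoly c) = 0) :
    δ < hammingNorm c := by
  by_contra! hle
  obtain ⟨k₀, hk₀⟩ := Function.ne_iff.1 hc
  set S : Finset (Fin n) := {k | c k ≠ 0} with hS
  have hle' : S.card ≤ δ := hle
  have hk₀S : k₀ ∈ S := by simpa [hS] using hk₀
  have hpoly (P : E[X]) (hP : P.natDegree < δ) :
      ∑ k, algebraMap F E (c k) * α ^ (k : ℕ) * P.eval (γ ^ (k : ℕ)) = 0 := by
    simp_rw [eval_eq_sum_range, Finset.mul_sum]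
    rw [Finset.sum_comm]
    refine Finset.sum_eq_zero fun t ht => ?_
    have ht' := h t (by rw [Finset.mem_range] at ht; omega)
    rw [aeval_vecPoly] at ht'
    rw [← mul_zero (P.coeff t), ← ht', Finset.mul_sum]
    refine Finset.sum_congr rfl fun k _ => ?_
    rw [mul_pow, ← pow_mul, ← pow_mul, mul_comm t]
    ring
  have hcard : 0 < S.card := Finset.card_pos.2 ⟨k₀, hk₀S⟩
  have key := hpoly (∏ k ∈ S.erase k₀, (X - C (γ ^ (k : ℕ)))) (by
    rw [natDegree_prod_of_monic _ _ fun k _ => monic_X_sub_C _]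
    simp only [natDegree_X_sub_C, Finset.sum_const, smul_eq_mul, mul_one,
      Finset.card_erase_of_mem hk₀S]
    omega)
  rw [Finset.sum_eq_single k₀] at key
  · have hprod : eval (γ ^ (k₀ : ℕ)) (∏ k ∈ S.erase k₀, (X - C (γ ^ (k : ℕ)))) ≠ 0 := by
      rw [eval_prod, Finset.prod_ne_zero_iff]
      intro k hk
      rw [eval_sub, eval_X, eval_C, sub_ne_zero]
      exact fun hkk => Finset.ne_of_mem_erase hk (hγ hkk.symm)
    refine mul_ne_zero (mul_ne_zero ?_ (pow_ne_zero _ hα)) hprod key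
    exact (_root_.map_ne_zero _).2 hk₀
  · intro k _ hk
    by_cases hck : c k = 0
    · simp [hck]
    · rw [eval_prod, Finset.prod_eq_zero (i := k) (Finset.mem_erase.2 ⟨hk, by simpa [hS] using hck⟩)
        (by simp), mul_zero]
  · simp

end VecPoly

theorem aeval_pow_card {F E : Type*} [Field F] [Fintype F] [Field E] [Algebra F E] (f : F[X])
    (a : E) : aeval (a ^ Fintype.card F) f = aeval a f ^ Fintype.card F := by
  rw [← expand_aeval, FiniteField.expand_card, map_pow]

/-- In a quadratic extension of a finite field, an element moved by Frobenius has degree two. -/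
theorem natDegree_minpoly_eq_two {F E : Type*} [Field F] [Fintype F] [Field E] [Algebra F E]
    (hrank : Module.finrank F E = 2) {a : E} (ha : a ^ Fintype.card F ≠ a) :
    (minpoly F a).natDegree = 2 := by
  have : FiniteDimensional F E := Module.finite_of_finrank_pos (by omega)
  have hint : IsIntegral F a := IsIntegral.of_finite F a
  have hle := minpoly.natDegree_le (A := F) a
  have hpos := minpoly.natDegree_pos hint
  have hne : (minpoly F a).natDegree ≠ 1 := by
    rw [Ne, minpoly.natDegree_eq_one_iff]
    rintro ⟨b, rfl⟩
    rw [← map_pow, FiniteField.pow_card] at ha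
    exact ha rfl
  omega

/-- A square root of `-1` lies in every finite base field of order not `3` modulo `4`. -/
theorem natDegree_minpoly_eq_one_of_sq_eq_neg_one {F E : Type*} [Field F] [Fintype F] [Field E]
    [Algebra F E] (hF : Fintype.card F % 4 ≠ 3) {a : E} (ha : a ^ 2 = -1) :
    (minpoly F a).natDegree = 1 := by
  rw [minpoly.natDegree_eq_one_iff]
  obtain ⟨b, hb⟩ := FiniteField.isSquare_neg_one_iff.2 hF
  have hb' : a ^ 2 = algebraMap F E b ^ 2 := by
    rw [ha, ← map_pow, pow_two, ← hb, map_neg, map_one]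
  rcases sq_eq_sq_iff_eq_or_eq_neg.1 hb' with h | h
  · exact ⟨b, h.symm⟩
  · exact ⟨-b, by rw [map_neg, h]⟩

/-- Let `q ≡ 1 (mod 4)` be a power of an odd prime, `n = q² + 1`,
`s = n/2`, and `β` a primitive `2n`-th root of unity in `E = F_{q⁴}`.  For
`1 ≤ i ≤ s - 1`, the negacyclic code `C` of length `n` over `F = F_{q²}` generated by
`g = M^{(s)} · M^{(s+2)} ⋯ M^{(s+2i)}` is an MDS code with parameters
`[n, n-2i-1, 2i+2]_{q²}`: it has `(q²)^(n-2i-1)` codewords (dimension `n-2i-1`) and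
minimum Hamming distance exactly `2i + 2`. -/
theorem negacyclic_MDS_q2_plus_one (p e q n s i : ℕ) (hp : p.Prime) (hpodd : Odd p)
    (he : 0 < e) (hq : q = p ^ e) (hq4 : q % 4 = 1)
    (hn : n = q ^ 2 + 1) (hs : s = n / 2) (hi1 : 1 ≤ i) (hi2 : i ≤ s - 1)
    (F E : Type*) [Field F] [Field E] [Algebra F E]
    [Fintype F] [Fintype E] [DecidableEq F]
    (hF : Fintype.card F = q ^ 2) (hE : Fintype.card E = q ^ 4)
    (β : E) (hβ : orderOf β = 2 * n)
    (g : F[X]) (hg : g = ∏ j ∈ Finset.range (i + 1), minpoly F (β ^ (s + 2 * j))) :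
    Nat.card {c : Fin n → F // g ∣ vecPoly c} = (q ^ 2) ^ (n - 2 * i - 1) ∧
    (∀ c : Fin n → F, g ∣ vecPoly c → c ≠ 0 → 2 * i + 2 ≤ hammingNorm c) ∧
    (∃ c : Fin n → F, g ∣ vecPoly c ∧ c ≠ 0 ∧ hammingNorm c = 2 * i + 2) := by
  have hodd : s % 2 = 1 ∧ n = 2 * s ∧ q ^ 2 % 4 = 1 := by
    obtain ⟨r, hr⟩ : ∃ r, q = 4 * r + 1 := ⟨q / 4, by omega⟩
    have hr2 : q ^ 2 = 8 * (2 * r ^ 2 + r) + 1 := by rw [hr]; ring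
    omega
  obtain ⟨hs_odd, hns, hq2⟩ := hodd
  have hq1 : 1 < q ^ 2 := by omega
  have hrank : Module.finrank F E = 2 := by
    have h := Module.card_eq_pow_finrank (K := F) (V := E)
    rw [hE, hF, show q ^ 4 = (q ^ 2) ^ 2 by ring] at h
    exact (Nat.pow_right_injective hq1 h).symm
  have : FiniteDimensional F E := Module.finite_of_finrank_pos (by omega)
  have hprim : IsPrimitiveRoot β (2 * n) := hβ ▸ IsPrimitiveRoot.orderOf β
  have hβ0 : β ≠ 0 := hprim.ne_zero (by omega)
  have hβn : β ^ n = -1 := by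
    have hsq : (β ^ n) ^ 2 = 1 := by rw [← pow_mul, mul_comm, hprim.pow_eq_one]
    refine (eq_or_eq_neg_of_sq_eq_sq _ _ (hsq.trans (one_pow 2).symm)).resolve_left fun h => ?_
    have := (hprim.pow_eq_one_iff_dvd n).1 h
    exact absurd (Nat.le_of_dvd (by omega) this) (by omega)
  have hβs : β ^ s * β ^ s = -1 := by rw [← pow_add, ← two_mul, ← hns, hβn]
  -- Frobenius sends `β ^ (s + 2j)` to `β ^ (s - 2j)`.
  have hfrob (j : ℕ) : (β ^ (s + 2 * j)) ^ Fintype.card F * β ^ (2 * j) = β ^ s := by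
    refine mul_right_cancel₀ (pow_ne_zero s hβ0) ?_
    rw [hβs, mul_assoc, ← pow_add, add_comm (2 * j) s, ← pow_succ, hF, ← hn, ← pow_mul, mul_comm,
      pow_mul, hβn]
    exact Odd.neg_one_pow (Nat.odd_iff.2 (by omega))
  have hmonic : g.Monic := hg ▸ monic_prod_of_monic _ _ fun j _ =>
    minpoly.monic (IsIntegral.of_finite F _)
  have hgdeg : g.natDegree = 2 * i + 1 := by
    rw [hg, natDegree_prod_of_monic _ _ fun j _ => minpoly.monic (IsIntegral.of_finite F _),
      Finset.sum_range_succ']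
    rw [natDegree_minpoly_eq_one_of_sq_eq_neg_one (by omega) (by simpa [pow_two] using hβs),
      Finset.sum_congr rfl (g := fun _ => 2)]
    · simp [mul_comm]
    · intro j hj
      rw [Finset.mem_range] at hj
      refine natDegree_minpoly_eq_two hrank fun h => ?_
      have h1 := hfrob (j + 1)
      rw [h, pow_add, mul_assoc, ← pow_add] at h1
      have h2 := (hprim.pow_eq_one_iff_dvd _).1 (mul_eq_left₀ (pow_ne_zero s hβ0) |>.1 h1)
      exact absurd (Nat.le_of_dvd (by omega) h2) (by omega)
  have hroot (j : ℕ) (hj : j ≤ i) : aeval (β ^ (s + 2 * j)) g = 0 := by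
    rw [hg, map_prod]
    exact Finset.prod_eq_zero (Finset.mem_range.2 (by omega)) (minpoly.aeval F _)
  have hbch (c : Fin n → F) (hc : g ∣ vecPoly c) (hc0 : c ≠ 0) : 2 * i + 2 ≤ hammingNorm c := by
    have hα0 : (β ^ (s + 2 * i)) ^ Fintype.card F ≠ 0 := pow_ne_zero _ (pow_ne_zero _ hβ0)
    refine lt_hammingNorm_of_aeval_eq_zero (γ := β ^ 2) hα0 ?_ hc0 fun t ht => ?_
    · have hprim2 : IsPrimitiveRoot (β ^ 2) n := hprim.pow (by omega) rfl
      exact fun a b hab => Fin.ext (hprim2.pow_inj a.2 b.2 hab)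
    refine aeval_eq_zero_of_dvd_aeval_eq_zero hc ?_
    have hαi := hfrob i
    rcases le_total i t with hit | hti
    · obtain ⟨j, rfl⟩ := Nat.exists_eq_add_of_le hit
      rw [← pow_mul β 2, mul_add 2 i j, pow_add β (2 * i), ← mul_assoc, hαi, ← pow_add]
      exact hroot j (by omega)
    · obtain ⟨j, rfl⟩ := Nat.exists_eq_add_of_le hti
      have hconj : (β ^ (s + 2 * (t + j))) ^ Fintype.card F * (β ^ 2) ^ t =
          (β ^ (s + 2 * j)) ^ Fintype.card F := by
        refine mul_right_cancel₀ (pow_ne_zero (2 * j) hβ0) ?_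
        rw [hfrob j, ← hαi, mul_assoc, ← pow_mul β 2 t, ← pow_add β (2 * t), ← mul_add]
      rw [hconj, aeval_pow_card, hroot j (by omega), zero_pow (by omega)]
  refine ⟨?_, hbch, ?_⟩
  · rw [card_dvd_vecPoly hmonic (m := n - 2 * i - 1) (by omega), hF]
  · have hvec : vecPoly (fun k : Fin n => g.coeff k) = g := by
      refine vecPoly_coeff_eq_self ?_
      rw [degree_eq_natDegree hmonic.ne_zero, hgdeg]
      exact_mod_cast (by omega : 2 * i + 1 < n)
    have hne : (fun k : Fin n => g.coeff k) ≠ 0 := by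
      intro h
      rw [h] at hvec
      exact hmonic.ne_zero (by rw [← hvec]; simp [vecPoly])
    have hdvd : g ∣ vecPoly (fun k : Fin n => g.coeff k) := hvec.symm ▸ dvd_rfl
    refine ⟨_, hdvd, hne, le_antisymm ?_ (hbch _ hdvd hne)⟩
    calc hammingNorm (fun k : Fin n => g.coeff k)
        ≤ (Finset.range (2 * i + 2)).card := by
          refine Finset.card_le_card_of_injOn (fun k : Fin n => (k : ℕ)) (fun k hk => ?_)
            (Fin.val_injective.injOn)
          have hk' : g.coeff k ≠ 0 := by simpa using hk
          have := le_natDegree_of_ne_zero hk'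
          simp only [Finset.coe_range, Set.mem_Iio]
          omega
      _ = 2 * i + 2 := Finset.card_range _
end

section
/- Let q be a power of an odd prime with q ≡ 1 (mod 4), let n = q² + 1 and s = n/2. Let δ be an integer with 0 ≤ δ ≤ (q−1)/2 and let C be the q²-ary negacyclic code of length n whose defining set is Z = ∪_{i=0}^{δ} C_{s−2i}, the union of the q²-ary cyclotomic cosets modulo 2n of s, s−2, …, s−2δ. Then C contains its Hermitian dual: C^{⊥h} ⊆ C. -/
open Polynomial in
/-- An element of an extension of a finite field `F` fixed by the `|F|`-power map lies in `F`. -/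
theorem exists_algebraMap_eq_of_pow_card_eq {F E : Type*} [Field F] [Field E] [Algebra F E]
    [Fintype F] {x : E} (hx : x ^ Fintype.card F = x) : ∃ a : F, algebraMap F E a = x := by
  have hsplits : (X ^ Fintype.card F - X : F[X]).Splits := by
    simpa using IsSplittingField.splits F (X ^ Fintype.card F - X : F[X])
  exact hsplits.mem_range_of_isRoot (FiniteField.X_pow_card_sub_X_ne_zero F Fintype.one_lt_card)
    (by simp [hx])

/-- A geometric sum over a nontrivial `n`-th root of unity vanishes. -/
theorem sum_fin_pow_mul_eq_zero {E : Type*} [Field E] {β : E} {n m : ℕ}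
    (hβ : orderOf β = 2 * n) (hm : Even m) (hdvd : ¬ 2 * n ∣ m) :
    ∑ t : Fin n, β ^ ((t : ℕ) * m) = 0 := by
  have hne : β ^ m - 1 ≠ 0 := fun h =>
    hdvd (hβ ▸ orderOf_dvd_of_pow_eq_one (sub_eq_zero.mp h))
  obtain ⟨r, rfl⟩ := hm
  have hone : (β ^ (r + r)) ^ n = 1 := by
    rw [← pow_mul, show (r + r) * n = 2 * n * r by ring, pow_mul, ← hβ, pow_orderOf_eq_one,
      one_pow]
  have hgeom := geom_sum_mul (β ^ (r + r)) n
  rw [hone, sub_self] at hgeom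
  rw [Fin.sum_univ_eq_sum_range (fun t => β ^ (t * (r + r))) n]
  simpa only [← pow_mul, mul_comm] using (mul_eq_zero.mp hgeom).resolve_right hne

/-- Modulo `4 * s = 2 * (q ^ 2 + 1)`, the `q ^ 2`-cyclotomic coset of `s - 2 * i` is
`{s - 2 * i, s + 2 * i}`. -/
theorem cyclotomicCoset_modEq {q s : ℤ} (hs : q ^ 2 + 1 = 2 * s) (hodd : Odd s) (i : ℤ) (k : ℕ) :
    ∃ a : ℤ, |a| = |i| ∧ (s - 2 * i) * q ^ (2 * k) ≡ s + 2 * a [ZMOD 4 * s] := by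
  induction k with
  | zero => exact ⟨-i, abs_neg i, by simp [sub_eq_add_neg, Int.ModEq.refl]⟩
  | succ k ih =>
    obtain ⟨a, ha, hmod⟩ := ih
    refine ⟨-a, by rw [abs_neg, ha], ?_⟩
    rw [show (s - 2 * i) * q ^ (2 * (k + 1)) = (s - 2 * i) * q ^ (2 * k) * q ^ 2 by ring]
    refine (hmod.mul_right _).trans (Int.ModEq.symm (Int.modEq_iff_dvd.mpr ?_))
    obtain ⟨r, hr⟩ := hodd
    refine ⟨r + a, ?_⟩
    rw [show q ^ 2 = 2 * s - 1 by linarith]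
    linear_combination 2 * s * hr

/-- The defining set `Z` satisfies `Z ∩ (-q Z) = ∅` modulo `2 * (q ^ 2 + 1)`. -/
theorem not_dvd_mul_add {q s d : ℤ} (hq : q % 4 = 1) (hq0 : 0 ≤ q) (hs : q ^ 2 + 1 = 2 * s)
    (hd : 2 * d ≤ q - 1) {i j : ℤ} (hi : |i| ≤ d) (hj : |j| ≤ d) (k l : ℕ) :
    ¬ 4 * s ∣ (s - 2 * i) * q ^ (2 * k) * q + (s - 2 * j) * q ^ (2 * l) := by
  obtain ⟨m, hm⟩ : ∃ m, q = 4 * m + 1 := ⟨q / 4, by omega⟩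
  have hodd : Odd s := ⟨4 * m ^ 2 + 2 * m, by subst hm; linarith⟩
  obtain ⟨a, ha, hamod⟩ := cyclotomicCoset_modEq hs hodd i k
  obtain ⟨b, hb, hbmod⟩ := cyclotomicCoset_modEq hs hodd j l
  rw [((hamod.mul_right q).add hbmod).dvd_iff]
  rintro ⟨c, hc⟩
  rw [← ha, abs_le] at hi
  rw [← hb, abs_le] at hj
  have hc' : s + (q * a + b) = 2 * s * (c - m) := by
    subst hm
    linarith
  have hlow : 0 < s + (q * a + b) := by nlinarith
  have hupp : s + (q * a + b) < 2 * s := by nlinarith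
  have hspos : 0 < 2 * s := by nlinarith
  rw [hc'] at hlow hupp
  have h0 : 0 < c - m := (mul_pos_iff_of_pos_left hspos).mp hlow
  nlinarith

/-- Let `q ≡ 1 (mod 4)` be a power of an odd prime, `n = q² + 1`,
`s = n/2`, and `0 ≤ δ ≤ (q-1)/2`.  Let `C` be the `q²`-ary negacyclic code of length
`n` with defining set `Z = ∪_{i=0}^{δ} C_{s-2i}` (union of `q²`-ary cyclotomic cosets
modulo `2n`), i.e. `c ∈ C` iff `c(β^j) = 0` for every `j ∈ Z`, where `β` is a fixed
primitive `2n`-th root of unity in an extension `E` of `F = F_{q²}`.  Then `C`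
contains its Hermitian dual: `C^{⊥h} ⊆ C`. -/
theorem negacyclic_hermitian_dual_containing_q2_plus_one (p e q n s δ : ℕ)
    (hp : p.Prime) (hpodd : Odd p) (he : 0 < e) (hq : q = p ^ e) (hq4 : q % 4 = 1)
    (hn : n = q ^ 2 + 1) (hs : s = n / 2) (hδ : δ ≤ (q - 1) / 2)
    (F E : Type*) [Field F] [Field E] [Algebra F E] [Fintype F]
    (hF : Fintype.card F = q ^ 2)
    (β : E) (hβ : orderOf β = 2 * n)
    (C : Set (Fin n → F))
    (hC : C = {c | ∀ i ≤ δ, ∀ k : ℕ,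
      ∑ t : Fin n, algebraMap F E (c t) * β ^ ((t : ℕ) * ((s - 2 * i) * q ^ (2 * k))) = 0}) :
    {u : Fin n → F | ∀ c ∈ C, ∑ t : Fin n, u t * (c t) ^ q = 0} ⊆ C := by
  subst hn hC
  have : Fact p.Prime := ⟨hp⟩
  have : CharP F p := charP_of_card_eq_prime_pow (f := e * 2)
    (by rw [hF, hq, pow_mul])
  have : CharP E p := charP_of_injective_algebraMap (algebraMap F E).injective p
  have hs2 : q ^ 2 + 1 = 2 * s := by
    have : q ^ 2 % 2 = 1 := by rw [Nat.pow_mod, show q % 2 = 1 by omega]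
    omega
  have hqodd : Odd q := Nat.odd_iff.mpr (by omega)
  have hsodd : Odd s := by
    obtain ⟨m, rfl⟩ : ∃ m, q = 4 * m + 1 := ⟨q / 4, by omega⟩
    exact ⟨4 * m ^ 2 + 2 * m, by linarith⟩
  have hδs : 2 * δ ≤ s := by nlinarith [show 2 * δ ≤ q by omega]
  have hzodd : ∀ i ≤ δ, ∀ k, Odd ((s - 2 * i) * q ^ (2 * k)) := fun i hi k =>
    (Nat.Odd.sub_even (by omega) hsodd (even_two_mul i)).mul hqodd.pow
  have hdisj : ∀ i ≤ δ, ∀ j ≤ δ, ∀ k l,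
      ¬ 2 * (q ^ 2 + 1) ∣ (s - 2 * i) * q ^ (2 * k) * q + (s - 2 * j) * q ^ (2 * l) := by
    intro i hi j hj k l h
    have h' := Int.natCast_dvd_natCast.mpr h
    rw [hs2] at h'
    push_cast [Nat.cast_sub (show 2 * i ≤ s by omega), Nat.cast_sub (show 2 * j ≤ s by omega)] at h'
    refine not_dvd_mul_add (q := q) (s := s) (d := δ) (i := i) (j := j) (by omega) (by omega)
      (by exact_mod_cast hs2) (by omega) (by simpa using hi) (by simpa using hj) k l ?_
    rwa [show (4 : ℤ) * s = 2 * (2 * s) by ring]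
  have hfrob : ∀ x y : E, (x + y) ^ q = x ^ q + y ^ q := fun x y => by
    rw [hq, add_pow_char_pow]
  have hfrob2 : ∀ x y : E, (x + y) ^ q ^ 2 = x ^ q ^ 2 + y ^ q ^ 2 := fun x y => by
    rw [pow_two, pow_mul, hfrob, hfrob, ← pow_mul, ← pow_mul]
  have hβ4 : β ^ q ^ 4 = β := by
    obtain ⟨m, rfl⟩ : ∃ m, q = 2 * m + 1 := hqodd
    rw [show (2 * m + 1) ^ 4 = 2 * ((2 * m + 1) ^ 2 + 1) * (2 * m ^ 2 + 2 * m) + 1 by ring,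
      pow_succ, pow_mul, ← hβ, pow_orderOf_eq_one, one_pow, one_mul]
  intro u hu i hi k
  set z := (s - 2 * i) * q ^ (2 * k) with hz
  -- Pairing `u` with the trace codeword of `γ`.
  have hpair : ∀ γ : E, γ ^ q ^ 4 = γ →
      γ * ∑ t : Fin (q ^ 2 + 1), algebraMap F E (u t) * β ^ ((t : ℕ) * z) +
      γ ^ q ^ 2 * ∑ t : Fin (q ^ 2 + 1), algebraMap F E (u t) * β ^ ((t : ℕ) * (z * q ^ 2)) = 0 := by
    intro γ hγ
    have hfix : ∀ t : ℕ, (γ * β ^ (t * z) + γ ^ q ^ 2 * β ^ (t * (z * q ^ 2))) ^ q ^ 2 =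
        γ * β ^ (t * z) + γ ^ q ^ 2 * β ^ (t * (z * q ^ 2)) := by
      intro t
      have hγ' : (γ ^ q ^ 2) ^ q ^ 2 = γ := by rw [← pow_mul, ← pow_add, hγ]
      have hβ' : (β ^ (t * (z * q ^ 2))) ^ q ^ 2 = β ^ (t * z) := by
        rw [← pow_mul, show t * (z * q ^ 2) * q ^ 2 = q ^ 4 * (t * z) by ring, pow_mul, hβ4]
      rw [hfrob2, mul_pow, mul_pow, hγ', hβ', ← pow_mul β, mul_assoc t z, add_comm]
    choose w hw using fun t : Fin (q ^ 2 + 1) =>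
      exists_algebraMap_eq_of_pow_card_eq (F := F) (by rw [hF]; exact hfix t)
    have hmem := hu (fun t => w t ^ q) ?_
    · have hwq : ∀ t, (w t ^ q) ^ q = w t := fun t => by
        rw [← pow_mul, ← pow_two, ← hF, FiniteField.pow_card]
      have h := congrArg (algebraMap F E) hmem
      simp only [hwq, map_sum, map_mul, hw, map_zero] at h
      rw [← h, Finset.mul_sum, Finset.mul_sum, ← Finset.sum_add_distrib]
      exact Finset.sum_congr rfl fun t _ => by ring
    · intro j hj l
      have hvanish : ∀ k', ∑ t : Fin (q ^ 2 + 1),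
          β ^ ((t : ℕ) * ((s - 2 * i) * q ^ (2 * k') * q + (s - 2 * j) * q ^ (2 * l))) = 0 :=
        fun k' => sum_fin_pow_mul_eq_zero hβ
          (((hzodd i hi k').mul hqodd).add_odd (hzodd j hj l)) (hdisj i hi j hj k' l)
      have hsplit : ∀ t : Fin (q ^ 2 + 1),
          algebraMap F E (w t ^ q) * β ^ ((t : ℕ) * ((s - 2 * j) * q ^ (2 * l))) =
          γ ^ q * β ^ ((t : ℕ) *
            ((s - 2 * i) * q ^ (2 * k) * q + (s - 2 * j) * q ^ (2 * l))) +
          (γ ^ q ^ 2) ^ q * β ^ ((t : ℕ) *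
            ((s - 2 * i) * q ^ (2 * (k + 1)) * q + (s - 2 * j) * q ^ (2 * l))) := by
        intro t
        rw [map_pow, hw, hfrob, mul_pow, mul_pow, add_mul, mul_assoc, mul_assoc, ← pow_mul β,
          ← pow_mul β, ← pow_add, ← pow_add, hz]
        congr 3 <;> ring
      rw [Finset.sum_congr rfl fun t _ => hsplit t, Finset.sum_add_distrib, ← Finset.mul_sum,
        ← Finset.mul_sum, hvanish, hvanish, mul_zero, mul_zero, add_zero]
  have hβ0 : β ≠ 0 := by
    rintro rfl
    simp at hβ
  have hβ2 : β ^ q ^ 2 - β ≠ 0 := by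
    intro h
    have hpow : β ^ (q ^ 2 - 1) = 1 := by
      refine mul_right_cancel₀ hβ0 ?_
      rw [← pow_succ, Nat.sub_add_cancel (by nlinarith [hqodd.pos]), one_mul, sub_eq_zero.mp h]
    have hle := Nat.le_of_dvd ?_ (hβ ▸ orderOf_dvd_of_pow_eq_one hpow)
    · omega
    · have : 5 ≤ q := by
        have := Nat.one_lt_pow he.ne' hp.one_lt
        omega
      have : 1 < q ^ 2 := by nlinarith
      omega
  have h1 := hpair 1 (one_pow _)
  have hb := hpair β hβ4
  rw [one_pow, one_mul, one_mul] at h1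
  refine (mul_eq_zero.mp ?_).resolve_left hβ2
  linear_combination β ^ q ^ 2 * h1 - hb
end

section
/- Let q be a power of an odd prime and let n = (q² + 1)/2. Let δ be an integer with 1 ≤ δ ≤ (q−1)/2 and let C be the q²-ary negacyclic code of length n whose defining set is Z = ∪_{i=1}^{δ} C_{2i−1}, the union of the q²-ary cyclotomic cosets modulo 2n of 1, 3, …, 2δ−1. Then C contains its Hermitian dual: C^{⊥h} ⊆ C. -/
open Finset Polynomial

/-- An element of an extension of a finite field `F` fixed by the `#F`-power map lies in `F`. -/
theorem mem_range_algebraMap_of_pow_card_eq {F E : Type*} [Field F] [Field E] [Algebra F E]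
    [Fintype F] {x : E} (hx : x ^ Fintype.card F = x) : ∃ y, algebraMap F E y = x := by
  have hne : (X ^ Fintype.card F - X : F[X]) ≠ 0 :=
    FiniteField.X_pow_card_sub_X_ne_zero F Fintype.one_lt_card
  have hsplits : (X ^ Fintype.card F - X : F[X]).Splits := by
    rw [splits_iff_card_roots, FiniteField.roots_X_pow_card_sub_X,
      FiniteField.X_pow_card_sub_X_natDegree_eq F Fintype.one_lt_card]
    rfl
  exact hsplits.mem_range_of_isRoot hne (by simp [hx])

/-- The evaluation of a word `c` over `F`, seen as a polynomial, at `β ^ m`. -/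
def wordEval {F E : Type*} [Field F] [Field E] [Algebra F E] {n : ℕ} (β : E) (c : Fin n → F)
    (m : ℕ) : E :=
  ∑ t : Fin n, algebraMap F E (c t) * β ^ ((t : ℕ) * m)

theorem wordEval_mul_card {F E : Type*} [Field F] [Field E] [Algebra F E] [Fintype F] {n : ℕ}
    (β : E) (c : Fin n → F) (m : ℕ) :
    wordEval β c (m * Fintype.card F) = wordEval β c m ^ Fintype.card F := by
  change _ = FiniteField.frobeniusAlgHom F E (wordEval β c m)
  simp only [wordEval, map_sum, map_mul, AlgHom.commutes]
  refine sum_congr rfl fun t _ => ?_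
  rw [FiniteField.coe_frobeniusAlgHom]
  ring

theorem wordEval_mul_card_pow_eq_zero {F E : Type*} [Field F] [Field E] [Algebra F E] [Fintype F]
    {n : ℕ} {β : E} {c : Fin n → F} {m : ℕ} (h : wordEval β c m = 0) (k : ℕ) :
    wordEval β c (m * Fintype.card F ^ k) = 0 := by
  induction k with
  | zero => simpa using h
  | succ k ih =>
    rw [pow_succ, ← mul_assoc, wordEval_mul_card, ih, zero_pow Fintype.card_ne_zero]

theorem sum_pow_eq_zero_of_even {E : Type*} [Field E] {n m : ℕ} {β : E}
    (hβ : orderOf β = 2 * n) (hm : Even m) (hnm : ¬ 2 * n ∣ m) :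
    ∑ t : Fin n, (β ^ m) ^ (t : ℕ) = 0 := by
  have hne : β ^ m ≠ 1 := fun h => hnm (hβ ▸ orderOf_dvd_of_pow_eq_one h)
  have hpow : (β ^ m) ^ n = 1 := by
    obtain ⟨r, rfl⟩ := hm
    rw [← pow_mul, show (r + r) * n = 2 * n * r by ring, pow_mul, ← hβ, pow_orderOf_eq_one, one_pow]
  rw [Fin.sum_univ_eq_sum_range (fun t => (β ^ m) ^ t), geom_sum_eq hne, hpow, sub_self, zero_div]

/-- If `#F = q ^ 2` and `β ^ q ^ 4 = β`, there is a word over `F` whose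
coordinates are the traces `β ^ (a + j q t) + β ^ (q ^ 2 (a + j q t))`. -/
theorem exists_trace_word {F E : Type*} [Field F] [Field E] [Algebra F E] [Fintype F] {q : ℕ}
    (hF : Fintype.card F = q ^ 2) {β : E} (hβ : β ^ q ^ 4 = β) (n a j : ℕ) :
    ∃ c : Fin n → F, ∀ t : Fin n, algebraMap F E (c t) =
      β ^ (a + j * q * (t : ℕ)) + β ^ (q ^ 2 * (a + j * q * (t : ℕ))) := by
  have key (m : ℕ) : ∃ y, algebraMap F E y = β ^ m + β ^ (q ^ 2 * m) := by
    apply mem_range_algebraMap_of_pow_card_eq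
    change FiniteField.frobeniusAlgHom F E _ = _
    rw [map_add, FiniteField.coe_frobeniusAlgHom, hF]
    simp only
    rw [← pow_mul, ← pow_mul, show q ^ 2 * m * q ^ 2 = q ^ 4 * m by ring, pow_mul β (q ^ 4), hβ,
      add_comm, mul_comm m]
  choose c hc using fun t : Fin n => key (a + j * q * (t : ℕ))
  exact ⟨c, hc⟩

theorem not_dvd_mul_add_s9 {q j i : ℕ} (hj : 0 < j) (hjq : j < q) (hiq : i < q) :
    ¬ q ^ 2 + 1 ∣ j * q + i := by
  refine Nat.not_dvd_of_pos_of_lt (by nlinarith) ?_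
  nlinarith

theorem not_dvd_cube_mul_add {q j i : ℕ} (hj : 0 < j) (hjq : j < q) (hiq : i < q) :
    ¬ q ^ 2 + 1 ∣ q ^ 3 * j + i := by
  intro h
  have hle : i < j * q := by nlinarith
  have hsum : q ^ 3 * j + i + (j * q - i) = (q ^ 2 + 1) * (j * q) := by
    zify [hle.le]
    ring
  have hdvd : q ^ 2 + 1 ∣ j * q - i := (Nat.dvd_add_right h).1 (hsum ▸ dvd_mul_right _ _)
  have := Nat.le_of_dvd (by omega) hdvd
  have : j * q ≤ q * q := Nat.mul_le_mul_right q hjq.le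
  nlinarith [Nat.sub_le (j * q) i]

/-- The trace words attached to an odd `j < q` vanish at `β ^ i` for every odd `i < q`. -/
theorem wordEval_trace_word {F E : Type*} [Field F] [Field E] [Algebra F E] {q n a j i : ℕ}
    {β : E} (hβ : orderOf β = 2 * n) (hn : 2 * n = q ^ 2 + 1) (hq : Odd q) {c : Fin n → F}
    (hc : ∀ t : Fin n, algebraMap F E (c t) =
      β ^ (a + j * q * (t : ℕ)) + β ^ (q ^ 2 * (a + j * q * (t : ℕ))))
    (hj : Odd j) (hjq : j < q) (hi : Odd i) (hiq : i < q) :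
    wordEval β c i = 0 := by
  have hsplit : wordEval β c i = β ^ a * ∑ t : Fin n, (β ^ (j * q + i)) ^ (t : ℕ) +
      β ^ (q ^ 2 * a) * ∑ t : Fin n, (β ^ (q ^ 3 * j + i)) ^ (t : ℕ) := by
    rw [wordEval, mul_sum, mul_sum, ← sum_add_distrib]
    refine sum_congr rfl fun t _ => ?_
    rw [hc]
    ring
  rw [hsplit, sum_pow_eq_zero_of_even hβ ((hj.mul hq).add_odd hi)
      (hn ▸ not_dvd_mul_add_s9 hj.pos hjq hiq),
    sum_pow_eq_zero_of_even hβ ((hq.pow.mul hj).add_odd hi)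
      (hn ▸ not_dvd_cube_mul_add hj.pos hjq hiq), mul_zero, mul_zero, add_zero]

/-- The Hermitian product of `u` with a trace word, in terms of evaluations of `u`. -/
theorem algebraMap_hermitian_trace_word {F E : Type*} [Field F] [Field E] [Algebra F E]
    {p e q n a j : ℕ} [Fact p.Prime] [CharP E p] (hq : q = p ^ e) {β : E} (hβ : β ^ q ^ 4 = β)
    {c : Fin n → F}
    (hc : ∀ t : Fin n, algebraMap F E (c t) =
      β ^ (a + j * q * (t : ℕ)) + β ^ (q ^ 2 * (a + j * q * (t : ℕ))))
    (u : Fin n → F) :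
    algebraMap F E (∑ t, u t * c t ^ q) =
      β ^ (q * a) * wordEval β u (j * q ^ 2) + β ^ (q ^ 3 * a) * wordEval β u j := by
  have hadd (x y : E) : (x + y) ^ q = x ^ q + y ^ q := by
    rw [hq, add_pow_char_pow]
  rw [map_sum, wordEval, wordEval, mul_sum, mul_sum, ← sum_add_distrib]
  refine sum_congr rfl fun t _ => ?_
  have hred : β ^ (q ^ 2 * (a + j * q * (t : ℕ)) * q) = β ^ (q ^ 3 * a) * β ^ ((t : ℕ) * j) := by
    rw [show q ^ 2 * (a + j * q * (t : ℕ)) * q = q ^ 3 * a + q ^ 4 * ((t : ℕ) * j) by ring,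
      pow_add, pow_mul β (q ^ 4), hβ]
  rw [map_mul, map_pow, hc, hadd, ← pow_mul, ← pow_mul, hred]
  ring


/-- Let `q` be a power of an odd prime, `n = (q² + 1)/2`, and
`1 ≤ δ ≤ (q-1)/2`.  Let `C` be the `q²`-ary negacyclic code of length `n` with
defining set `Z = ∪_{i=1}^{δ} C_{2i-1}` (union of `q²`-ary cyclotomic cosets modulo
`2n`), i.e. `c ∈ C` iff `c(β^j) = 0` for every `j ∈ Z`, where `β` is a fixed
primitive `2n`-th root of unity in an extension `E` of `F = F_{q²}`.  Then `C`
contains its Hermitian dual: `C^{⊥h} ⊆ C`. -/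
theorem negacyclic_hermitian_dual_containing_half_q2_plus_one (p e q n δ : ℕ)
    (hp : p.Prime) (hpodd : Odd p) (he : 0 < e) (hq : q = p ^ e)
    (hn : n = (q ^ 2 + 1) / 2) (hδ1 : 1 ≤ δ) (hδ2 : δ ≤ (q - 1) / 2)
    (F E : Type*) [Field F] [Field E] [Algebra F E] [Fintype F]
    (hF : Fintype.card F = q ^ 2)
    (β : E) (hβ : orderOf β = 2 * n)
    (C : Set (Fin n → F))
    (hC : C = {c | ∀ i, 1 ≤ i → i ≤ δ → ∀ k : ℕ,
      ∑ t : Fin n, algebraMap F E (c t) * β ^ ((t : ℕ) * ((2 * i - 1) * q ^ (2 * k))) = 0}) :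
    {u : Fin n → F | ∀ c ∈ C, ∑ t : Fin n, u t * (c t) ^ q = 0} ⊆ C := by
  have : Fact p.Prime := ⟨hp⟩
  have hqodd : Odd q := hq ▸ hpodd.pow
  have hn2 : 2 * n = q ^ 2 + 1 := by
    have : Even (q ^ 2 + 1) := hqodd.pow.add_one
    rw [hn, Nat.mul_div_cancel' this.two_dvd]
  have : CharP F p := charP_of_card_eq_prime_pow (f := e * 2) (by rw [hF, hq, pow_mul])
  have : CharP E p := charP_of_injective_algebraMap (algebraMap F E).injective p
  have hβ4 : β ^ q ^ 4 = β := by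
    have h1 : β ^ (q ^ 2 + 1) = 1 := by rw [← hn2, ← hβ, pow_orderOf_eq_one]
    have hq1 : 1 ≤ q ^ 2 := Nat.one_le_pow _ _ hqodd.pos
    have h4 : q ^ 4 = (q ^ 2 + 1) * (q ^ 2 - 1) + 1 := by
      zify [hq1]
      ring
    rw [h4, pow_succ, pow_mul, h1, one_pow, one_mul]
  have hmem (c : Fin n → F) : c ∈ C ↔ ∀ i, 1 ≤ i → i ≤ δ → wordEval β c (2 * i - 1) = 0 := by
    rw [hC]
    refine ⟨fun h i hi hiδ => by simpa [wordEval] using h i hi hiδ 0, fun h i hi hiδ k => ?_⟩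
    rw [pow_mul, ← hF]
    exact wordEval_mul_card_pow_eq_zero (h i hi hiδ) k
  intro u hu
  rw [hmem]
  intro j hj hjδ
  have hdual (a : ℕ) : β ^ (q * a) * wordEval β u ((2 * j - 1) * q ^ 2) +
      β ^ (q ^ 3 * a) * wordEval β u (2 * j - 1) = 0 := by
    obtain ⟨c, hc⟩ := exists_trace_word hF hβ4 n a (2 * j - 1)
    have hcC : c ∈ C := (hmem c).2 fun i hi hiδ =>
      wordEval_trace_word hβ hn2 hqodd hc (by grind) (by omega) (by grind) (by omega)
    rw [← algebraMap_hermitian_trace_word hq hβ4 hc, hu c hcC, map_zero]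
  have h0 := hdual 0
  have h1 := hdual 1
  simp only [mul_zero, pow_zero, one_mul, mul_one] at h0 h1
  have hprod : (β ^ q ^ 3 - β ^ q) * wordEval β u (2 * j - 1) = 0 := by
    linear_combination h1 - β ^ q * h0
  refine (mul_eq_zero.1 hprod).resolve_left fun h => ?_
  have hdvd : q ^ 2 + 1 ∣ 2 * q := by
    have hone : β ^ (2 * q) = 1 := by
      have hper : β ^ q ^ 3 * β ^ q = 1 := by
        rw [← pow_add, show q ^ 3 + q = (q ^ 2 + 1) * q by ring, pow_mul, ← hn2, ← hβ,
          pow_orderOf_eq_one, one_pow]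
      rw [two_mul, pow_add, ← hper, sub_eq_zero.1 h]
    rw [← hn2, ← hβ]
    exact orderOf_dvd_of_pow_eq_one hone
  have hq3 : 3 ≤ q := by omega
  have := Nat.le_of_dvd (by omega) hdvd
  nlinarith
end
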